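/- There exists ε₀ > 0 such that for every ε with 0 < ε < ε₀, the complement ℝ³ ∖ (⋃_{i=1}^{m} A_i ∪ ⋃_{j=1}^{m} B_j ∪ ⋃_{k=1}^{m} C_k) has at least m²(m − 1) connected components. -/

import Mathlib

open Pointwise

/-- The vertex `w(j,0) = (0, −3j, 1 − 2^{−j})`. -/
noncomputable def wJ (j : ℕ) : Fin 3 → ℝ :=
  ![0, -(3 * (j : ℝ)), 1 - (1/2 : ℝ) ^ j]

/-- The vertex `w(0,k)`: the origin for `k = 0`, the point
`(cos θ_k − 1, sin θ_k, 0)` with `θ_k = (π/3)((k−1)/m + 1)` for `1 ≤ k ≤ m+1`,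
and `(−2, 0, 0)` for `k = m+2`. -/
noncomputable def wK (m k : ℕ) : Fin 3 → ℝ :=
  if k = 0 then ![0, 0, 0]
  else if k = m + 2 then ![-2, 0, 0]
  else ![Real.cos (Real.pi / 3 * (((k : ℝ) - 1) / (m : ℝ) + 1)) - 1,
         Real.sin (Real.pi / 3 * (((k : ℝ) - 1) / (m : ℝ) + 1)), 0]

/-- The grid vertex `w(j,k) = w(j,0) + w(0,k)`. -/
noncomputable def wGrid (m j k : ℕ) : Fin 3 → ℝ := wJ j + wK m k

/-- The point `v(j,k) = (1 − j/(m+1))·w(j,k) + (j/(m+1))·w(j,k+1)`. -/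
noncomputable def vGrid (m j k : ℕ) : Fin 3 → ℝ :=
  (1 - (j : ℝ) / ((m : ℝ) + 1)) • wGrid m j k + ((j : ℝ) / ((m : ℝ) + 1)) • wGrid m j (k + 1)

/-- The point `u₁ = (−2, −3m−3, 1 − 2^{−m})`. -/
noncomputable def uOne (m : ℕ) : Fin 3 → ℝ := ![-2, -(3 * (m : ℝ)) - 3, 1 - (1/2 : ℝ) ^ m]

/-- The point `u₀ = (−2, −3m−3, 0)`. -/
noncomputable def uZero (m : ℕ) : Fin 3 → ℝ := ![-2, -(3 * (m : ℝ)) - 3, 0]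

/-- The polytope `K_m`: the convex hull of the vertices of the construction. -/
noncomputable def Km (m : ℕ) : Set (Fin 3 → ℝ) :=
  convexHull ℝ
    ({p | ∃ j ≤ m, p = wGrid m j 0} ∪ {p | ∃ j ≤ m, p = wGrid m j (m + 2)} ∪
     {p | ∃ j ≤ m, ∃ k ≤ m + 1, p = vGrid m j k} ∪
     {p | ∃ k ≤ m + 2, p = uZero m - wK m k} ∪ {p | ∃ k ≤ m + 2, p = uOne m - wK m k})

/-- The angle of the `k`-th point on the unit circle. -/
noncomputable def ang (m k : ℕ) : ℝ :=
  if k = 0 then 0 else if k = m + 2 then Real.pi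
  else Real.pi / 3 * (((k : ℝ) - 1) / (m : ℝ) + 1)

lemma wK_eq (m k : ℕ) : wK m k = ![Real.cos (ang m k) - 1, Real.sin (ang m k), 0] := by
  unfold wK ang
  split_ifs <;> simp
  norm_num

lemma ang_lt_succ (m k : ℕ) (hm : 2 ≤ m) (hk : k ≤ m + 1) : ang m k < ang m (k + 1) := by
  have hpi := Real.pi_pos
  have hm0 : (0 : ℝ) < m := by exact_mod_cast (by omega : 0 < m)
  unfold ang
  rcases Nat.eq_zero_or_pos k with h | h
  · subst h
    rw [if_pos rfl, if_neg (by omega), if_neg (by omega)]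
    push_cast
    have : ((1 : ℝ) - 1) / m + 1 = 1 := by simp
    simp only [Nat.cast_one, zero_add, this]; positivity
  · rw [if_neg (by omega), if_neg (by omega), if_neg (by omega)]
    split_ifs with h2
    · have hk' : k = m + 1 := by omega
      subst hk'
      push_cast
      have : ((m : ℝ) + 1 - 1) / m + 1 = 2 := by field_simp; ring
      rw [this]; linarith
    · push_cast
      have : ((k : ℝ) - 1) / m < ((k : ℝ) + 1 - 1) / m := by gcongr; linarith
      have h3 : 0 < Real.pi / 3 := by positivity
      nlinarith

lemma ang_lt (m : ℕ) (hm : 2 ≤ m) (a b : ℕ) (hab : a < b) (hb : b ≤ m + 2) :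
    ang m a < ang m b := by
  induction b with
  | zero => omega
  | succ b ih =>
    have h := ang_lt_succ m b hm (by omega)
    rcases Nat.lt_or_ge a b with h1 | h1
    · exact (ih h1 (by omega)).trans h
    · have : a = b := by omega
      subst this; exact h

lemma ang_zero (m : ℕ) : ang m 0 = 0 := by simp [ang]
lemma ang_last (m : ℕ) : ang m (m + 2) = Real.pi := by simp [ang]

lemma ang_nonneg (m : ℕ) (hm : 2 ≤ m) (a : ℕ) (ha : a ≤ m + 2) : 0 ≤ ang m a := by
  rcases Nat.eq_zero_or_pos a with h | h
  · subst h; rw [ang_zero]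
  · rw [← ang_zero m]; exact (ang_lt m hm 0 a h ha).le

lemma ang_le_pi (m : ℕ) (hm : 2 ≤ m) (a : ℕ) (ha : a ≤ m + 2) : ang m a ≤ Real.pi := by
  rcases Nat.eq_or_lt_of_le ha with h | h
  · subst h; rw [ang_last]
  · rw [← ang_last m]; exact (ang_lt m hm a _ h le_rfl).le

/-- x-coordinate of `w(0,k)`. -/
noncomputable def X (m k : ℕ) : ℝ := Real.cos (ang m k) - 1
/-- y-coordinate of `w(0,k)`. -/
noncomputable def Y (m k : ℕ) : ℝ := Real.sin (ang m k)

lemma wK_XY (m k : ℕ) : wK m k = ![X m k, Y m k, 0] := wK_eq m k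

lemma X_zero (m : ℕ) : X m 0 = 0 := by simp [X, ang_zero]
lemma X_last (m : ℕ) : X m (m + 2) = -2 := by simp [X, ang_last]; norm_num
lemma Y_zero (m : ℕ) : Y m 0 = 0 := by simp [Y, ang_zero]
lemma Y_last (m : ℕ) : Y m (m + 2) = 0 := by simp [Y, ang_last]
lemma X_nonpos (m k : ℕ) : X m k ≤ 0 := by
  have := Real.cos_le_one (ang m k); unfold X; linarith
lemma X_ge (m k : ℕ) : -2 ≤ X m k := by
  have := Real.neg_one_le_cos (ang m k); unfold X; linarith
lemma Y_le (m k : ℕ) : Y m k ≤ 1 := Real.sin_le_one _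
lemma Y_nonneg (m k : ℕ) (hm : 2 ≤ m) (hk : k ≤ m + 2) : 0 ≤ Y m k :=
  Real.sin_nonneg_of_nonneg_of_le_pi (ang_nonneg m hm k hk) (ang_le_pi m hm k hk)

lemma X_lt (m : ℕ) (hm : 2 ≤ m) (a b : ℕ) (hab : a < b) (hb : b ≤ m + 2) : X m b < X m a := by
  have := Real.cos_lt_cos_of_nonneg_of_le_pi (ang_nonneg m hm a (by omega))
    (ang_le_pi m hm b hb) (ang_lt m hm a b hab hb)
  unfold X; linarith

lemma X_le (m : ℕ) (hm : 2 ≤ m) (a b : ℕ) (hab : a ≤ b) (hb : b ≤ m + 2) : X m b ≤ X m a := by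
  rcases Nat.eq_or_lt_of_le hab with h | h
  · rw [h]
  · exact (X_lt m hm a b h hb).le

/-- Mid-angle of the `k`-th chord. -/
noncomputable def midA (m k : ℕ) : ℝ := (ang m k + ang m (k + 1)) / 2
/-- Slope of the `k`-th chord. -/
noncomputable def cS (m k : ℕ) : ℝ := -Real.cos (midA m k) / Real.sin (midA m k)
/-- Intercept of the `k`-th chord. -/
noncomputable def dS (m k : ℕ) : ℝ :=
  (Real.cos ((ang m (k + 1) - ang m k) / 2) - Real.cos (midA m k)) / Real.sin (midA m k)

lemma sin_mid_pos (m k : ℕ) (hm : 2 ≤ m) (hk : k ≤ m + 1) : 0 < Real.sin (midA m k) := by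
  have h1 := ang_lt_succ m k hm hk
  have h2 := ang_nonneg m hm k (by omega)
  have h3 := ang_le_pi m hm (k + 1) (by omega)
  apply Real.sin_pos_of_pos_of_lt_pi <;> unfold midA <;> linarith

lemma line_sub (m k k' : ℕ) (hm : 2 ≤ m) (hk : k ≤ m + 1) :
    cS m k * X m k' + dS m k - Y m k' =
      (Real.cos ((ang m (k + 1) - ang m k) / 2) - Real.cos (ang m k' - midA m k))
        / Real.sin (midA m k) := by
  have := (sin_mid_pos m k hm hk).ne'
  rw [Real.cos_sub]
  unfold cS dS X Y
  field_simp
  ring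

lemma line_left (m k : ℕ) (hm : 2 ≤ m) (hk : k ≤ m + 1) :
    cS m k * X m k + dS m k = Y m k := by
  have := line_sub m k k hm hk
  have h : Real.cos (ang m k - midA m k) = Real.cos ((ang m (k + 1) - ang m k) / 2) := by
    rw [← Real.cos_neg]; congr 1; unfold midA; ring
  rw [h, sub_self, zero_div] at this
  linarith

lemma line_right (m k : ℕ) (hm : 2 ≤ m) (hk : k ≤ m + 1) :
    cS m k * X m (k + 1) + dS m k = Y m (k + 1) := by
  have := line_sub m k (k + 1) hm hk
  have h : Real.cos (ang m (k + 1) - midA m k) = Real.cos ((ang m (k + 1) - ang m k) / 2) := by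
    congr 1; unfold midA; ring
  rw [h, sub_self, zero_div] at this
  linarith

lemma line_lt (m k k' : ℕ) (hm : 2 ≤ m) (hk : k ≤ m + 1) (hk' : k' ≤ m + 2)
    (h1 : k' ≠ k) (h2 : k' ≠ k + 1) : Y m k' < cS m k * X m k' + dS m k := by
  have h := line_sub m k k' hm hk
  have hs := sin_mid_pos m k hm hk
  have a0 := ang_lt_succ m k hm hk
  have a1 := ang_nonneg m hm k' hk'
  have a2 := ang_le_pi m hm k' hk'
  have a3 := ang_nonneg m hm k (by omega)
  have a4 := ang_le_pi m hm (k + 1) (by omega)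
  have key : Real.cos (ang m k' - midA m k) < Real.cos ((ang m (k + 1) - ang m k) / 2) := by
    rw [← Real.cos_abs (ang m k' - midA m k)]
    apply Real.cos_lt_cos_of_nonneg_of_le_pi
    · linarith
    · rw [abs_le]; unfold midA; constructor <;> linarith
    · rw [lt_abs]
      rcases Nat.lt_or_ge k' k with h3 | h3
      · have := ang_lt m hm k' k h3 (by omega)
        right; unfold midA; linarith
      · have := ang_lt m hm (k + 1) k' (by omega) (by omega)
        left; unfold midA; linarith
  have : 0 < cS m k * X m k' + dS m k - Y m k' := by
    rw [h]; apply div_pos _ hs; linarith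
  linarith

lemma line_le (m k k' : ℕ) (hm : 2 ≤ m) (hk : k ≤ m + 1) (hk' : k' ≤ m + 2) :
    Y m k' ≤ cS m k * X m k' + dS m k := by
  by_cases h1 : k' = k
  · rw [h1, line_left m k hm hk]
  by_cases h2 : k' = k + 1
  · rw [h2, line_right m k hm hk]
  exact (line_lt m k k' hm hk hk' h1 h2).le

lemma line_nonneg (m k : ℕ) (hm : 2 ≤ m) (hk : k ≤ m + 1) (x : ℝ) (h1 : -2 ≤ x) (h2 : x ≤ 0) :
    0 ≤ cS m k * x + dS m k := by
  have a := line_le m k 0 hm hk (by omega)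
  have b := line_le m k (m + 2) hm hk le_rfl
  rw [X_zero, Y_zero] at a
  rw [X_last, Y_last] at b
  nlinarith

/-- On its own chord, the line of chord `k` is below the line of chord `k'`. -/
lemma line_le_line (m k k' : ℕ) (hm : 2 ≤ m) (hk : k ≤ m + 1) (hk' : k' ≤ m + 1) (x : ℝ)
    (h1 : X m (k + 1) ≤ x) (h2 : x ≤ X m k) :
    cS m k * x + dS m k ≤ cS m k' * x + dS m k' := by
  have a := line_le m k' k hm hk' (by omega)
  have b := line_le m k' (k + 1) hm hk' (by omega)
  rw [← line_left m k hm hk] at a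
  rw [← line_right m k hm hk] at b
  have := X_lt m hm k (k + 1) (by omega) (by omega)
  by_contra hc
  push Not at hc
  rcases le_total (cS m k) (cS m k') with h | h <;> nlinarith

/-- On its own chord, the line of chord `k` is at most 1. -/
lemma line_le_one (m k : ℕ) (hm : 2 ≤ m) (hk : k ≤ m + 1) (x : ℝ)
    (h1 : X m (k + 1) ≤ x) (h2 : x ≤ X m k) :
    cS m k * x + dS m k ≤ 1 := by
  have a := Y_le m k
  have b := Y_le m (k + 1)
  rw [← line_left m k hm hk] at a
  rw [← line_right m k hm hk] at b
  rcases le_total (cS m k) 0 with h | h <;> nlinarith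

/-- Coordinates of the points `v`, at fraction `s` of the `k`-th chord. -/
noncomputable def VX (m : ℕ) (s : ℝ) (k : ℕ) : ℝ := (1 - s) * X m k + s * X m (k + 1)
/-- Coordinates of the points `v`, at fraction `s` of the `k`-th chord. -/
noncomputable def VY (m : ℕ) (s : ℝ) (k : ℕ) : ℝ := (1 - s) * Y m k + s * Y m (k + 1)

lemma VY_eq (m : ℕ) (s : ℝ) (k : ℕ) (hm : 2 ≤ m) (hk : k ≤ m + 1) :
    VY m s k = cS m k * VX m s k + dS m k := by
  unfold VY VX
  rw [← line_left m k hm hk, ← line_right m k hm hk]; ring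

lemma VY_le (m : ℕ) (s : ℝ) (k k' : ℕ) (hm : 2 ≤ m) (hk : k ≤ m + 1) (hk' : k' ≤ m + 1)
    (h0 : 0 ≤ s) (h1 : s ≤ 1) :
    VY m s k' ≤ cS m k * VX m s k' + dS m k := by
  have a := line_le m k k' hm hk (by omega)
  have b := line_le m k (k' + 1) hm hk (by omega)
  unfold VY VX
  nlinarith

lemma VX_mem (m : ℕ) (s : ℝ) (k : ℕ) (hm : 2 ≤ m) (hk : k ≤ m + 1)
    (h0 : 0 ≤ s) (h1 : s ≤ 1) : X m (k + 1) ≤ VX m s k ∧ VX m s k ≤ X m k := by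
  have := X_lt m hm k (k + 1) (by omega) (by omega)
  unfold VX
  constructor <;> nlinarith

lemma VX_lt (m : ℕ) (s t : ℝ) (k : ℕ) (hm : 2 ≤ m) (hk : k ≤ m + 1) (h : s < t) :
    VX m t k < VX m s k := by
  have := X_lt m hm k (k + 1) (by omega) (by omega)
  unfold VX
  nlinarith

lemma VX_step (m : ℕ) (s : ℝ) (k k' : ℕ) (hm : 2 ≤ m) (hkk : k < k') (hk : k' ≤ m + 1)
    (h0 : 0 ≤ s) (h1 : s ≤ 1) : VX m s k' ≤ VX m s k := by
  have a := (VX_mem m s k hm (by omega) h0 h1).1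
  have b := (VX_mem m s k' hm (by omega) h0 h1).2
  have := X_le m hm (k + 1) k' (by omega) (by omega)
  linarith

/-- The supporting line of the truncated polygon at the edge cutting corner `a+1`. -/
lemma exists_lam (m : ℕ) (s : ℝ) (a : ℕ) (hm : 2 ≤ m) (ha : a ≤ m) (h0 : 0 < s) (h1 : s < 1) :
    ∃ c d : ℝ, (∀ x y : ℝ, y ≤ cS m a * x + dS m a → y ≤ cS m (a + 1) * x + dS m (a + 1) →
        (VX m s a ≤ x ∨ x ≤ VX m s (a + 1)) → y ≤ c * x + d) ∧
      (∀ x, x < VX m s a → c * x + d < cS m a * x + dS m a) ∧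
      (∀ x, VX m s (a + 1) < x → c * x + d < cS m (a + 1) * x + dS m (a + 1)) := by
  have hX1 := X_lt m hm a (a + 1) (by omega) (by omega)
  have hX2 := X_lt m hm (a + 1) (a + 2) (by omega) (by omega)
  have hv : VX m s (a + 1) < VX m s a := by
    simp only [VX]; nlinarith
  have e1 := VY_eq m s a hm (by omega)
  have e2 := VY_eq m s (a + 1) hm (by omega)
  have l1 : VY m s (a + 1) < cS m a * VX m s (a + 1) + dS m a := by
    have p := line_right m a hm (by omega)
    have q := line_lt m a (a + 2) hm (by omega) (by omega) (by omega) (by omega)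
    simp only [VX, VY]; nlinarith
  have l2 : VY m s a < cS m (a + 1) * VX m s a + dS m (a + 1) := by
    have p := line_left m (a + 1) hm (by omega)
    have q := line_lt m (a + 1) a hm (by omega) (by omega) (by omega) (by omega)
    simp only [VX, VY]; nlinarith
  obtain ⟨c, hc⟩ : ∃ c : ℝ, c * (VX m s a - VX m s (a + 1)) = VY m s a - VY m s (a + 1) :=
    ⟨_, div_mul_cancel₀ _ (by linarith)⟩
  have hc1 : cS m a < c := by
    by_contra h; push Not at h; nlinarith
  have hc2 : c < cS m (a + 1) := by
    by_contra h; push Not at h; nlinarith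
  refine ⟨c, VY m s a - c * VX m s a, ?_, ?_, ?_⟩
  · rintro x y hy1 hy2 (h | h)
    · nlinarith
    · nlinarith
  · intro x h; nlinarith
  · intro x h; nlinarith

/-- The fraction `j/(m+1)`. -/
noncomputable def fr (m j : ℕ) : ℝ := (j : ℝ) / ((m : ℝ) + 1)

lemma fr_nonneg (m j : ℕ) : 0 ≤ fr m j := by unfold fr; positivity
lemma fr_pos (m j : ℕ) (hj : 1 ≤ j) : 0 < fr m j := by
  have : (0 : ℝ) < j := by exact_mod_cast hj
  unfold fr; positivity
lemma fr_lt_one (m j : ℕ) (hj : j ≤ m) : fr m j < 1 := by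
  have : (j : ℝ) ≤ m := by exact_mod_cast hj
  unfold fr; rw [div_lt_one (by positivity)]; linarith
lemma fr_lt (m j l : ℕ) (h : j < l) : fr m j < fr m l := by
  have : (j : ℝ) < l := by exact_mod_cast h
  unfold fr; gcongr
lemma fr_le (m j l : ℕ) (h : j ≤ l) : fr m j ≤ fr m l := by
  have : (j : ℝ) ≤ l := by exact_mod_cast h
  unfold fr; gcongr

lemma wGrid_eq (m j k : ℕ) :
    wGrid m j k = ![X m k, Y m k - 3 * (j : ℝ), 1 - (1/2 : ℝ) ^ j] := by
  unfold wGrid wJ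
  rw [wK_XY]
  ext i; fin_cases i <;> simp
  ring

lemma vGrid_eq (m j k : ℕ) :
    vGrid m j k = ![VX m (fr m j) k, VY m (fr m j) k - 3 * (j : ℝ), 1 - (1/2 : ℝ) ^ j] := by
  unfold vGrid
  rw [wGrid_eq, wGrid_eq]
  ext i; fin_cases i <;> simp [VX, VY, fr] <;> ring

lemma Km_half (m : ℕ) (α β γ b : ℝ)
    (h1 : ∀ j ≤ m, β * (-(3 * (j : ℝ))) + γ * (1 - (1/2 : ℝ) ^ j) ≤ b)
    (h2 : ∀ j ≤ m, -2 * α + β * (-(3 * (j : ℝ))) + γ * (1 - (1/2 : ℝ) ^ j) ≤ b)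
    (h3 : ∀ j ≤ m, ∀ k ≤ m + 1, α * VX m (fr m j) k + β * (VY m (fr m j) k - 3 * (j : ℝ))
      + γ * (1 - (1/2 : ℝ) ^ j) ≤ b)
    (h4 : ∀ k ≤ m + 2, α * (-2 - X m k) + β * (-(3 * (m : ℝ)) - 3 - Y m k) ≤ b)
    (h5 : ∀ k ≤ m + 2, α * (-2 - X m k) + β * (-(3 * (m : ℝ)) - 3 - Y m k)
      + γ * (1 - (1/2 : ℝ) ^ m) ≤ b)
    (p : Fin 3 → ℝ) (hp : p ∈ Km m) : α * p 0 + β * p 1 + γ * p 2 ≤ b := by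
  have hconv : Convex ℝ {p : Fin 3 → ℝ | α * p 0 + β * p 1 + γ * p 2 ≤ b} := by
    intro x hx y hy s t hs ht hst
    simp only [Set.mem_ofPred_eq, Pi.add_apply, Pi.smul_apply, smul_eq_mul] at *
    have e : b = s * b + t * b := by rw [← add_mul, hst, one_mul]
    rw [e]
    have := mul_le_mul_of_nonneg_left hx hs
    have := mul_le_mul_of_nonneg_left hy ht
    linarith
  refine convexHull_min ?_ hconv hp
  rintro q ((((⟨j, hj, rfl⟩ | ⟨j, hj, rfl⟩) | ⟨j, hj, k, hk, rfl⟩) | ⟨k, hk, rfl⟩) | ⟨k, hk, rfl⟩)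
  · have := h1 j hj
    rw [wGrid_eq, X_zero, Y_zero]
    simp; simp at this; linarith
  · have := h2 j hj
    rw [wGrid_eq, X_last, Y_last]
    simp; simp at this; linarith
  · have := h3 j hj k hk
    rw [vGrid_eq]
    simp; simp at this; linarith
  · have := h4 k hk
    rw [wK_XY]
    simp [uZero]; linarith
  · have := h5 k hk
    rw [wK_XY]
    simp [uOne]; simp at this; linarith

lemma half_le_one (j : ℕ) : (1/2 : ℝ) ^ j ≤ 1 := pow_le_one₀ (by norm_num) (by norm_num)
lemma hpow_pos (j : ℕ) : 0 < (1/2 : ℝ) ^ j := by positivity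

lemma VX_range (m : ℕ) (s : ℝ) (k : ℕ) (hm : 2 ≤ m) (hk : k ≤ m + 1)
    (h0 : 0 ≤ s) (h1 : s ≤ 1) : -2 ≤ VX m s k ∧ VX m s k ≤ 0 := by
  have := VX_mem m s k hm hk h0 h1
  exact ⟨(X_ge m _).trans this.1, this.2.trans (X_nonpos m _)⟩

lemma VY_le_one (m : ℕ) (s : ℝ) (k : ℕ) (h0 : 0 ≤ s) (h1 : s ≤ 1) : VY m s k ≤ 1 := by
  have a := Y_le m k
  have b := Y_le m (k + 1)
  unfold VY; nlinarith

lemma Km_A (m k : ℕ) (hm : 2 ≤ m) (hk : k ≤ m + 1) (p : Fin 3 → ℝ) (hp : p ∈ Km m) :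
    p 1 ≤ cS m k * p 0 + dS m k - 3 * p 2 := by
  have n0 := line_nonneg m k hm hk 0 (by norm_num) le_rfl
  have n2 := line_nonneg m k hm hk (-2) le_rfl (by norm_num)
  have hz : ∀ j : ℕ, 1 - (1/2 : ℝ) ^ j ≤ j := by
    intro j
    rcases Nat.eq_zero_or_pos j with h | h
    · subst h; simp
    · have h1 : (1 : ℝ) ≤ j := by exact_mod_cast h
      have := hpow_pos j
      linarith
  have hm0 : (0 : ℝ) ≤ m := by positivity
  have := Km_half m (-cS m k) 1 3 (dS m k) ?_ ?_ ?_ ?_ ?_ p hp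
  · linarith
  · intro j hj; have := hz j; linarith
  · intro j hj; have := hz j; linarith
  · intro j hj k' hk'
    have := hz j
    have := VY_le m (fr m j) k k' hm hk hk' (fr_nonneg m j) (fr_lt_one m j hj).le
    linarith
  · intro k' hk'
    have := line_nonneg m k hm hk (-2 - X m k') (by linarith [X_nonpos m k']) (by linarith [X_ge m k'])
    have := Y_nonneg m k' hm hk'
    linarith
  · intro k' hk'
    have := line_nonneg m k hm hk (-2 - X m k') (by linarith [X_nonpos m k']) (by linarith [X_ge m k'])
    have := Y_nonneg m k' hm hk'
    have := hpow_pos m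
    linarith

lemma Km_C (m k : ℕ) (hm : 2 ≤ m) (hk : k ≤ m + 1) (p : Fin 3 → ℝ) (hp : p ∈ Km m) :
    -(3 * (m : ℝ)) - 3 - p 1 ≤ cS m k * (-2 - p 0) + dS m k := by
  have n0 := line_nonneg m k hm hk 0 (by norm_num) le_rfl
  have n2 := line_nonneg m k hm hk (-2) le_rfl (by norm_num)
  have := Km_half m (cS m k) (-1) 0 (dS m k - 2 * cS m k + 3 * m + 3) ?_ ?_ ?_ ?_ ?_ p hp
  · linarith
  · intro j hj
    have : (j : ℝ) ≤ m := by exact_mod_cast hj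
    linarith
  · intro j hj
    have : (j : ℝ) ≤ m := by exact_mod_cast hj
    linarith
  · intro j hj k' hk'
    have : (j : ℝ) ≤ m := by exact_mod_cast hj
    have hr := VX_range m (fr m j) k' hm hk' (fr_nonneg m j) (fr_lt_one m j hj).le
    have := line_nonneg m k hm hk (-2 - VX m (fr m j) k') (by linarith) (by linarith)
    have a := Y_nonneg m k' hm (by omega)
    have b := Y_nonneg m (k' + 1) hm (by omega)
    have c : 0 ≤ VY m (fr m j) k' := by
      have := fr_nonneg m j
      have := fr_lt_one m j hj
      unfold VY
      exact add_nonneg (mul_nonneg (by linarith) a) (mul_nonneg (by linarith) b)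
    linarith
  · intro k' hk'
    have := line_le m k k' hm hk hk'
    linarith
  · intro k' hk'
    have := line_le m k k' hm hk hk'
    linarith

lemma num_lvl (j l : ℕ) (h : l ≠ j) :
    3 * ((j : ℝ) - l) + 1 ≤ 4 * 2 ^ j * ((1/2 : ℝ) ^ l - (1/2 : ℝ) ^ j) := by
  have e : (2 : ℝ) ^ j * (1/2 : ℝ) ^ j = 1 := by rw [← mul_pow]; norm_num
  rcases Nat.lt_or_gt_of_ne h with h | h
  · obtain ⟨a, rfl⟩ := Nat.exists_eq_add_of_lt h
    have e2 : (2 : ℝ) ^ l * (1/2 : ℝ) ^ l = 1 := by rw [← mul_pow]; norm_num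
    have e3 : (2 : ℝ) ^ (l + a + 1) * (1/2 : ℝ) ^ l = 2 ^ (a + 1) := by
      rw [add_assoc, pow_add, mul_right_comm, e2, one_mul]
    have h2 : ((a + 1 : ℕ) : ℝ) + 1 ≤ 2 ^ (a + 1) := by
      exact_mod_cast Nat.lt_two_pow_self
    push_cast at *
    nlinarith
  · obtain ⟨a, rfl⟩ := Nat.exists_eq_add_of_lt h
    have e3 : (2 : ℝ) ^ j * (1/2 : ℝ) ^ (j + a + 1) = (1/2) ^ (a + 1) := by
      rw [add_assoc, pow_add, ← mul_assoc, e, one_mul]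
    have : 1 - 3 * ((a : ℝ) + 1) ≤ 4 * ((1/2 : ℝ) ^ (a + 1) - 1) := by
      rcases Nat.eq_zero_or_pos a with h | h
      · subst h; norm_num
      · have h1 : (1 : ℝ) ≤ a := by exact_mod_cast h
        have := hpow_pos (a + 1)
        linarith
    push_cast
    nlinarith

lemma num_u (j m : ℕ) (h : j ≤ m) :
    3 * ((j : ℝ) - m) - 3 ≤ 4 * 2 ^ j * ((1/2 : ℝ) ^ m - (1/2 : ℝ) ^ j) := by
  rcases Nat.eq_or_lt_of_le h with h | h
  · subst h; simp
  · have := num_lvl j m (by omega)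
    linarith

lemma Km_B (m j : ℕ) (hm : 2 ≤ m) (hj : j ≤ m) (c d : ℝ)
    (hV : ∀ k ≤ m + 1, VY m (fr m j) k ≤ c * VX m (fr m j) k + d)
    (hd : 0 ≤ d) (hcd : 0 ≤ c * (-2) + d) (p : Fin 3 → ℝ) (hp : p ∈ Km m) :
    p 1 ≤ c * p 0 + d - 3 * j + 4 * 2 ^ j * (1 - (1/2 : ℝ) ^ j - p 2) := by
  have hn : ∀ x : ℝ, -2 ≤ x → x ≤ 0 → 0 ≤ c * x + d := by
    intro x h1 h2; nlinarith
  have e : (2 : ℝ) ^ j * (1/2 : ℝ) ^ j = 1 := by rw [← mul_pow]; norm_num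
  have hjm : (j : ℝ) ≤ m := by exact_mod_cast hj
  have hj2 : (1 : ℝ) ≤ 2 ^ j := one_le_pow₀ (by norm_num)
  have := Km_half m (-c) 1 (4 * 2 ^ j) (d - 3 * j + 4 * 2 ^ j * (1 - (1/2 : ℝ) ^ j))
    ?_ ?_ ?_ ?_ ?_ p hp
  · linarith
  · intro l hl
    by_cases h : l = j
    · subst h; linarith
    · have := num_lvl j l h; linarith
  · intro l hl
    by_cases h : l = j
    · subst h; linarith
    · have := num_lvl j l h; linarith
  · intro l hl k hk
    by_cases h : l = j
    · subst h; have := hV k hk; linarith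
    · have hr := VX_range m (fr m l) k hm hk (fr_nonneg m l) (fr_lt_one m l hl).le
      have := VY_le_one m (fr m l) k (fr_nonneg m l) (fr_lt_one m l hl).le
      have := hn _ hr.1 hr.2
      have := num_lvl j l h
      linarith
  · intro k hk
    have := hn (-2 - X m k) (by linarith [X_nonpos m k]) (by linarith [X_ge m k])
    have := Y_nonneg m k hm hk
    linarith
  · intro k hk
    have := hn (-2 - X m k) (by linarith [X_nonpos m k]) (by linarith [X_ge m k])
    have := Y_nonneg m k hm hk
    have := num_u j m hj
    linarith

/-! ### Membership -/

lemma Km_comb (m : ℕ) (p q : Fin 3 → ℝ) (hp : p ∈ Km m) (hq : q ∈ Km m) (t : ℝ)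
    (h0 : 0 ≤ t) (h1 : t ≤ 1) (r : Fin 3 → ℝ)
    (hr : ∀ i, r i = (1 - t) * p i + t * q i) : r ∈ Km m := by
  have : r = (1 - t) • p + t • q := by ext i; simp [hr]
  rw [this]
  exact (convex_convexHull ℝ _) hp hq (by linarith) h0 (by ring)

lemma Km_w (m j : ℕ) (hj : j ≤ m) (x : ℝ) (h1 : -2 ≤ x) (h2 : x ≤ 0) :
    ![x, -(3 * (j : ℝ)), 1 - (1/2 : ℝ) ^ j] ∈ Km m := by
  have a : wGrid m j 0 ∈ Km m := subset_convexHull ℝ _ (by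
    left; left; left; left; exact ⟨j, hj, rfl⟩)
  have b : wGrid m j (m + 2) ∈ Km m := subset_convexHull ℝ _ (by
    left; left; left; right; exact ⟨j, hj, rfl⟩)
  rw [wGrid_eq, X_zero, Y_zero] at a
  rw [wGrid_eq, X_last, Y_last] at b
  refine Km_comb m _ _ a b (-x / 2) (by linarith) (by linarith) _ ?_
  intro i; fin_cases i <;> simp <;> ring

lemma Km_v (m j k : ℕ) (hj : j ≤ m) (hk : k ≤ m + 1) :
    ![VX m (fr m j) k, VY m (fr m j) k - 3 * (j : ℝ), 1 - (1/2 : ℝ) ^ j] ∈ Km m := by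
  rw [← vGrid_eq]
  exact subset_convexHull ℝ _ (by left; left; right; exact ⟨j, hj, k, hk, rfl⟩)

lemma Km_u (m k : ℕ) (hm : 2 ≤ m) (hk : k ≤ m + 2) (z : ℝ) (h1 : 0 ≤ z)
    (h2 : z ≤ 1 - (1/2 : ℝ) ^ m) :
    ![-2 - X m k, -(3 * (m : ℝ)) - 3 - Y m k, z] ∈ Km m := by
  have a : uZero m - wK m k ∈ Km m := subset_convexHull ℝ _ (by
    left; right; exact ⟨k, hk, rfl⟩)
  have b : uOne m - wK m k ∈ Km m := subset_convexHull ℝ _ (by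
    right; exact ⟨k, hk, rfl⟩)
  rw [wK_XY] at a b
  have hp : 0 < 1 - (1/2 : ℝ) ^ m := by
    have : (1/2 : ℝ) ^ m < 1 := pow_lt_one₀ (by norm_num) (by norm_num) (by omega)
    linarith
  refine Km_comb m _ _ a b (z / (1 - (1/2 : ℝ) ^ m)) (by positivity)
    ((div_le_one hp).2 h2) _ ?_
  intro i; fin_cases i
  · simp [uZero, uOne]; ring
  · simp [uZero, uOne]; ring
  · have := div_mul_cancel₀ z hp.ne'
    simp [uZero, uOne]; simp at this; linarith

lemma Km_z (m : ℕ) (p : Fin 3 → ℝ) (hp : p ∈ Km m) : 0 ≤ p 2 ∧ p 2 ≤ 1 - (1/2 : ℝ) ^ m := by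
  have hh : ∀ j ≤ m, (1/2 : ℝ) ^ m ≤ (1/2 : ℝ) ^ j := fun j hj =>
    pow_le_pow_of_le_one (by norm_num) (by norm_num) hj
  constructor
  · have := Km_half m 0 0 (-1) 0 ?_ ?_ ?_ ?_ ?_ p hp
    · linarith
    · intro j hj; linarith [half_le_one j]
    · intro j hj; linarith [half_le_one j]
    · intro j hj k hk; linarith [half_le_one j]
    · intro k hk; linarith
    · intro k hk; linarith [half_le_one m]
  · have := Km_half m 0 0 1 (1 - (1/2 : ℝ) ^ m) ?_ ?_ ?_ ?_ ?_ p hp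
    · linarith
    · intro j hj; linarith [hh j hj]
    · intro j hj; linarith [hh j hj]
    · intro j hj k hk; linarith [hh j hj]
    · intro k hk; linarith [half_le_one m]
    · intro k hk; linarith

/-- `K` is closed under moving in the `-y` direction (until `y = -3m-3`). -/
lemma Km_down (m : ℕ) (hm : 2 ≤ m) (x y y1 z : ℝ) (h1 : -2 ≤ x) (h2 : x ≤ 0)
    (hp : ![x, y1, z] ∈ Km m) (hy : y ≤ y1) (hy0 : -(3 * (m : ℝ)) - 3 ≤ y) :
    ![x, y, z] ∈ Km m := by
  have hz := Km_z m _ hp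
  simp only [Matrix.cons_val] at hz
  have a := Km_u m 0 hm (by omega) z hz.1 hz.2
  have b := Km_u m (m + 2) hm (by omega) z hz.1 hz.2
  rw [X_zero, Y_zero] at a
  rw [X_last, Y_last] at b
  have c : ![x, -(3 * (m : ℝ)) - 3, z] ∈ Km m := by
    refine Km_comb m _ _ a b (1 + x / 2) (by linarith) (by linarith) _ ?_
    intro i; fin_cases i <;> simp <;> ring
  rcases eq_or_lt_of_le (hy0.trans hy) with h | h
  · have : y = y1 := by linarith
    rw [this]; exact hp
  have hd : 0 < y1 - (-(3 * (m : ℝ)) - 3) := by linarith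
  refine Km_comb m _ _ hp c ((y1 - y) / (y1 - (-(3 * (m : ℝ)) - 3)))
    (div_nonneg (by linarith) hd.le) ((div_le_one hd).2 (by linarith)) _ ?_
  intro i; fin_cases i
  · simp; ring
  · have := div_mul_cancel₀ (y1 - y) hd.ne'
    simp; linarith
  · simp; ring

lemma mem_A (m i : ℕ) (ε : ℝ) (p : Fin 3 → ℝ) :
    p ∈ (![(0 : ℝ), 0, -((i : ℝ) / (m : ℝ)) * ε] +ᵥ Km m) ↔
      ![p 0, p 1, p 2 + (i : ℝ) / m * ε] ∈ Km m := by
  rw [Set.mem_vadd_set_iff_neg_vadd_mem]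
  have : -![(0 : ℝ), 0, -((i : ℝ) / (m : ℝ)) * ε] +ᵥ p = ![p 0, p 1, p 2 + (i : ℝ) / m * ε] := by
    ext a; fin_cases a <;> simp [add_comm]
  rw [this]

lemma mem_B (m j : ℕ) (p : Fin 3 → ℝ) :
    p ∈ ((-(wJ j)) +ᵥ Km m) ↔
      ![p 0, p 1 - 3 * (j : ℝ), p 2 + (1 - (1/2 : ℝ) ^ j)] ∈ Km m := by
  rw [Set.mem_vadd_set_iff_neg_vadd_mem]
  have : - -(wJ j) +ᵥ p = ![p 0, p 1 - 3 * (j : ℝ), p 2 + (1 - (1/2 : ℝ) ^ j)] := by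
    ext a; fin_cases a <;> simp [wJ] <;> ring
  rw [this]

lemma mem_C (m k : ℕ) (p : Fin 3 → ℝ) :
    p ∈ ((wK m k + wK m (k + 1) - uOne m) +ᵥ Km m) ↔
      ![-2 - (X m k + X m (k + 1) - p 0), -(3 * (m : ℝ)) - 3 - (Y m k + Y m (k + 1) - p 1),
        p 2 + (1 - (1/2 : ℝ) ^ m)] ∈ Km m := by
  rw [Set.mem_vadd_set_iff_neg_vadd_mem]
  have : -(wK m k + wK m (k + 1) - uOne m) +ᵥ p =
      ![-2 - (X m k + X m (k + 1) - p 0), -(3 * (m : ℝ)) - 3 - (Y m k + Y m (k + 1) - p 1),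
        p 2 + (1 - (1/2 : ℝ) ^ m)] := by
    rw [wK_XY, wK_XY]
    ext a; fin_cases a <;> simp [uOne] <;> ring
  rw [this]

/-- Lower end of the slab of hole `(i,j,k)`. -/
noncomputable def zlo (m : ℕ) (ε : ℝ) (i j : ℕ) : ℝ :=
  if i = m then -(1/2 : ℝ) ^ (j + 1) else -(((i + 1 : ℕ) : ℝ) / m * ε)

/-- The prism containing hole `(i,j,k)`. -/
def hU (m : ℕ) (ε : ℝ) (i j k : ℕ) : Set (Fin 3 → ℝ) :=
  {p | VX m (fr m (j + 1)) k < p 0 ∧ p 0 < VX m (fr m j) k ∧ zlo m ε i j < p 2 ∧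
    p 2 < -((i : ℝ) / m * ε) ∧ cS m k * p 0 + dS m k - 1 < p 1 ∧ p 1 < cS m k * p 0 + dS m k}

/-- The closed prism containing hole `(i,j,k)`. -/
def hF (m : ℕ) (ε : ℝ) (i j k : ℕ) : Set (Fin 3 → ℝ) :=
  {p | VX m (fr m (j + 1)) k ≤ p 0 ∧ p 0 ≤ VX m (fr m j) k ∧ zlo m ε i j ≤ p 2 ∧
    p 2 ≤ -((i : ℝ) / m * ε) ∧ cS m k * p 0 + dS m k - 1 ≤ p 1 ∧ p 1 ≤ cS m k * p 0 + dS m k}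

lemma hU_open (m : ℕ) (ε : ℝ) (i j k : ℕ) : IsOpen (hU m ε i j k) := by
  unfold hU
  repeat' apply IsOpen.and
  all_goals exact isOpen_lt (by fun_prop) (by fun_prop)

lemma hF_closed (m : ℕ) (ε : ℝ) (i j k : ℕ) : IsClosed (hF m ε i j k) := by
  unfold hF
  simp only [Set.ofPred_and]
  repeat' apply IsClosed.inter
  all_goals exact isClosed_le (by fun_prop) (by fun_prop)

lemma hU_sub_hF (m : ℕ) (ε : ℝ) (i j k : ℕ) : hU m ε i j k ⊆ hF m ε i j k :=
  fun _ ⟨a, b, c, d, e, f⟩ => ⟨a.le, b.le, c.le, d.le, e.le, f.le⟩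

/-- Chord points at the bottom of `K`. -/
lemma Km_chord (m k : ℕ) (hm : 2 ≤ m) (hk : k ≤ m) (x : ℝ)
    (h1 : X m (k + 1) ≤ x) (h2 : x ≤ X m k) : ![x, cS m k * x + dS m k, 0] ∈ Km m := by
  have a := Km_v m 0 k (by omega) (by omega)
  have b := Km_v m 0 (k + 1) (by omega) (by omega)
  have hX := X_lt m hm k (k + 1) (by omega) (by omega)
  have hd : 0 < X m k - X m (k + 1) := by linarith
  have e := div_mul_cancel₀ (X m k - x) hd.ne'
  have f0 : fr m 0 = 0 := by simp [fr]
  simp only [f0, VX, VY] at a b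
  refine Km_comb m _ _ a b ((X m k - x) / (X m k - X m (k + 1))) (div_nonneg (by linarith) hd.le)
    ((div_le_one hd).2 (by linarith)) _ ?_
  set t := (X m k - x) / (X m k - X m (k + 1))
  intro i; fin_cases i
  · simp; linarith
  · have p := line_left m k hm (by omega)
    have q := line_right m k hm (by omega)
    have : x = X m k - t * (X m k - X m (k + 1)) := by linarith
    simp; rw [← p, ← q, this]; ring
  · simp

/-- `B_j` near the top: pieces of the union of the translates. -/
lemma Km_Bmem (m j : ℕ) (hm : 2 ≤ m) (hj : j + 1 ≤ m) (x y y0 z : ℝ) (h1 : -2 ≤ x) (h2 : x ≤ 0)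
    (h : ![x, y0 - 3 * ((j + 1 : ℕ) : ℝ), 1 - (1/2 : ℝ) ^ (j + 1)] ∈ Km m)
    (hz0 : -(1/2 : ℝ) ^ (j + 1) ≤ z) (hz : z ≤ 0)
    (hy : y ≤ y0 + (-z * 2 ^ (j + 1)) * (3 - y0)) (hy0 : -1 ≤ y) :
    ![x, y - 3 * ((j + 1 : ℕ) : ℝ), z + (1 - (1/2 : ℝ) ^ (j + 1))] ∈ Km m := by
  have hw := Km_w m j (by omega) x h1 h2
  have hjm : ((j + 1 : ℕ) : ℝ) ≤ m := by exact_mod_cast hj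
  have e : (2 : ℝ) ^ (j + 1) * (1/2 : ℝ) ^ (j + 1) = 1 := by rw [← mul_pow]; norm_num
  have hp : (0 : ℝ) < 2 ^ (j + 1) := by positivity
  refine Km_down m hm x _ (y0 - 3 * ((j + 1 : ℕ) : ℝ) + (-z * 2 ^ (j + 1)) * (3 - y0)) _ h1 h2 ?_
    (by linarith) (by linarith)
  refine Km_comb m _ _ h hw (-z * 2 ^ (j + 1)) (mul_nonneg (by linarith) hp.le) (by nlinarith) _ ?_
  intro i; fin_cases i
  · simp; ring
  · simp; ring
  · have e2 : (1/2 : ℝ) ^ j = 2 * (1/2 : ℝ) ^ (j + 1) := by rw [pow_succ]; ring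
    simp only [Fin.reduceFinMk, Matrix.cons_val]
    rw [e2]
    linear_combination -z * e

section cover
variable (m : ℕ) (ε : ℝ)

/-- Being outside of all the translates. -/
def outS (p : Fin 3 → ℝ) : Prop :=
  (∀ i, 1 ≤ i → i ≤ m → ![p 0, p 1, p 2 + (i : ℝ) / m * ε] ∉ Km m) ∧
  (∀ j, 1 ≤ j → j ≤ m → ![p 0, p 1 - 3 * (j : ℝ), p 2 + (1 - (1/2 : ℝ) ^ j)] ∉ Km m) ∧
  (∀ k, 1 ≤ k → k ≤ m → ![-2 - (X m k + X m (k + 1) - p 0),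
    -(3 * (m : ℝ)) - 3 - (Y m k + Y m (k + 1) - p 1), p 2 + (1 - (1/2 : ℝ) ^ m)] ∉ Km m)
end cover

lemma mem_compl_iff_outS (m : ℕ) (ε : ℝ) (p : Fin 3 → ℝ) :
    p ∈ (((⋃ i ∈ Finset.Icc 1 m, (![(0 : ℝ), 0, -((i : ℝ) / (m : ℝ)) * ε] +ᵥ Km m)) ∪
             (⋃ j ∈ Finset.Icc 1 m, ((-(wJ j)) +ᵥ Km m)) ∪
             (⋃ k ∈ Finset.Icc 1 m, ((wK m k + wK m (k + 1) - uOne m) +ᵥ Km m)))ᶜ) ↔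
      outS m ε p := by
  rw [Set.mem_compl_iff]
  simp only [Set.mem_union, Set.mem_iUnion, mem_A, mem_B, mem_C, Finset.mem_Icc, outS,
    not_or, not_exists, and_imp, exists_prop, not_and, and_assoc]

lemma cover (m : ℕ) (hm : 2 ≤ m) (ε : ℝ) (he : 0 < ε) (he8 : ε ≤ 1 / 8)
    (he2 : 2 * ε < (1/2 : ℝ) ^ m) (i j k : ℕ)
    (hi : 1 ≤ i) (him : i ≤ m) (hj : 1 ≤ j) (hjm : j + 1 ≤ m) (hk : 1 ≤ k) (hkm : k ≤ m)
    (p : Fin 3 → ℝ) (hp : p ∈ hF m ε i j k) (ho : outS m ε p) : p ∈ hU m ε i j k := by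
  obtain ⟨hx0, hx1, hz0, hz1, hy0, hy1⟩ := hp
  obtain ⟨hA, hB, hC⟩ := ho
  have hm0 : (0 : ℝ) < m := by exact_mod_cast (by omega : 0 < m)
  have hj1R : (1 : ℝ) ≤ j := by exact_mod_cast hj
  have hiR : (1 : ℝ) ≤ i := by exact_mod_cast hi
  have himR : (i : ℝ) ≤ m := by exact_mod_cast him
  have hjmR : (j : ℝ) + 1 ≤ m := by exact_mod_cast hjm
  have v0 := VX_mem m (fr m (j + 1)) k hm (by omega) (fr_nonneg _ _) (fr_lt_one m _ hjm).le
  have v1 := VX_mem m (fr m j) k hm (by omega) (fr_nonneg _ _) (fr_lt_one m _ (by omega)).le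
  have hX0 : X m (k + 1) ≤ p 0 := v0.1.trans hx0
  have hX1 : p 0 ≤ X m k := hx1.trans v1.2
  have hx2 : -2 ≤ p 0 := (X_ge m _).trans hX0
  have hxn : p 0 ≤ 0 := hX1.trans (X_nonpos m _)
  have hL0 := line_nonneg m k hm (by omega) (p 0) hx2 hxn
  have hL1 := line_le_one m k hm (by omega) (p 0) hX0 hX1
  have hpi : 0 ≤ (i : ℝ) / m * ε := by positivity
  have hzn : p 2 ≤ 0 := by linarith
  have hstep : ((i + 1 : ℕ) : ℝ) / m * ε = (i : ℝ) / m * ε + ε / m := by push_cast; ring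
  have hem : ε / m ≤ ε := div_le_self he.le (by linarith)
  have hhj : (1/2 : ℝ) ^ (j + 1) ≤ 1 / 4 := by
    calc (1/2 : ℝ) ^ (j + 1) ≤ (1/2 : ℝ) ^ 2 :=
          pow_le_pow_of_le_one (by norm_num) (by norm_num) (by omega)
      _ = 1 / 4 := by norm_num
  have hhm : (1/2 : ℝ) ^ m ≤ 1 / 4 := by
    calc (1/2 : ℝ) ^ m ≤ (1/2 : ℝ) ^ 2 :=
          pow_le_pow_of_le_one (by norm_num) (by norm_num) (by omega)
      _ = 1 / 4 := by norm_num
  have hchord := Km_chord m k hm hkm (p 0) hX0 hX1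
  have bot : ![p 0, p 1, 0] ∈ Km m :=
    Km_down m hm _ _ _ _ hx2 hxn hchord hy1 (by linarith)
  have htop : p 2 ≠ -((i : ℝ) / m * ε) := by
    intro h
    apply hA i hi him
    rw [h, neg_add_cancel]; exact bot
  have hwj1 := Km_w m (j + 1) hjm (p 0) hx2 hxn
  have hz : -(1/2 : ℝ) ^ (j + 1) ≤ p 2 := by
    unfold zlo at hz0
    split_ifs at hz0 with h
    · exact hz0
    · have h1 : (1/2 : ℝ) ^ m ≤ (1/2 : ℝ) ^ (j + 1) :=
        pow_le_pow_of_le_one (by norm_num) (by norm_num) hjm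
      have h2 : (i : ℝ) / m * ε ≤ ε :=
        mul_le_of_le_one_left he.le ((div_le_one hm0).2 himR)
      linarith
  have hout : p 1 ≠ cS m k * p 0 + dS m k := by
    intro h
    apply hC k hk hkm
    have a := Km_u m k hm (by omega) (p 2 + (1 - (1/2 : ℝ) ^ m)) (by linarith) (by linarith)
    have b := Km_u m (k + 1) hm (by omega) (p 2 + (1 - (1/2 : ℝ) ^ m)) (by linarith) (by linarith)
    have hX := X_lt m hm k (k + 1) (by omega) (by omega)
    have hd : 0 < X m k - X m (k + 1) := by linarith
    have e := div_mul_cancel₀ (p 0 - X m (k + 1)) hd.ne'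
    refine Km_comb m _ _ a b ((p 0 - X m (k + 1)) / (X m k - X m (k + 1)))
      (div_nonneg (by linarith) hd.le) ((div_le_one hd).2 (by linarith)) _ ?_
    set t := (p 0 - X m (k + 1)) / (X m k - X m (k + 1))
    intro i; fin_cases i
    · simp; linarith
    · have hp := line_left m k hm (by omega)
      have hq := line_right m k hm (by omega)
      have : p 0 = X m (k + 1) + t * (X m k - X m (k + 1)) := by linarith
      simp; rw [h, this, ← hp, ← hq]; ring
    · simp; ring
  have hzj : VX m (fr m (j + 1)) k ≠ p 0 ∧ VX m (fr m j) k ≠ p 0 := by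
    constructor
    · intro h
      apply hB (j + 1) (by omega) hjm
      have hv := Km_v m (j + 1) k hjm (by omega)
      rw [VY_eq m _ k hm (by omega), h] at hv
      refine Km_Bmem m j hm hjm _ _ _ _ hx2 hxn hv hz hzn ?_ (by linarith)
      have : 0 ≤ (-p 2 * 2 ^ (j + 1)) * (3 - (cS m k * p 0 + dS m k)) := by
        apply mul_nonneg (mul_nonneg _ (by positivity)) <;> linarith
      linarith
    · intro h
      apply hB j (by omega) (by omega)
      have hv := Km_v m j k (by omega) (by omega)
      rw [VY_eq m _ k hm (by omega), h] at hv
      obtain ⟨l, rfl⟩ : ∃ l, j = l + 1 := ⟨j - 1, by omega⟩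
      refine Km_Bmem m l hm (by omega) _ _ _ _ hx2 hxn hv ?_ hzn ?_ (by linarith)
      · have : (1/2 : ℝ) ^ (l + 1 + 1) ≤ (1/2 : ℝ) ^ (l + 1) :=
          pow_le_pow_of_le_one (by norm_num) (by norm_num) (by omega)
        linarith
      have : 0 ≤ (-p 2 * 2 ^ (l + 1)) * (3 - (cS m k * p 0 + dS m k)) := by
        apply mul_nonneg (mul_nonneg _ (by positivity)) <;> linarith
      linarith
  have hw0 : ![p 0, 0 - 3 * ((j + 1 : ℕ) : ℝ), 1 - (1/2 : ℝ) ^ (j + 1)] ∈ Km m := by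
    rw [zero_sub]; exact hwj1
  have e2 : (2 : ℝ) ^ (j + 1) * (1/2 : ℝ) ^ (j + 1) = 1 := by rw [← mul_pow]; norm_num
  have hlast : zlo m ε i j ≠ p 2 ∧ cS m k * p 0 + dS m k - 1 ≠ p 1 := by
    unfold zlo at hz0 ⊢
    split_ifs at hz0 ⊢ with h
    · constructor
      · intro h'
        apply hB (j + 1) (by omega) hjm
        refine Km_Bmem m j hm hjm _ _ _ _ hx2 hxn hw0 hz hzn ?_ (by linarith)
        rw [← h', neg_neg, mul_comm ((1/2 : ℝ) ^ (j + 1)), e2]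
        linarith
      · intro h'
        apply hB (j + 1) (by omega) hjm
        refine Km_Bmem m j hm hjm _ _ _ _ hx2 hxn hw0 hz hzn ?_ (by linarith)
        have : 0 ≤ (-p 2 * 2 ^ (j + 1)) * (3 - 0 : ℝ) := by
          apply mul_nonneg (mul_nonneg _ (by positivity)) <;> linarith
        linarith
    · constructor
      · intro h'
        apply hA (i + 1) (by omega) (by omega)
        rw [← h', neg_add_cancel]; exact bot
      · intro h'
        apply hA (i + 1) (by omega) (by omega)
        have hw1 := Km_w m 1 (by omega) (p 0) hx2 hxn
        obtain ⟨t, ht⟩ : ∃ t, t = p 2 + ((i + 1 : ℕ) : ℝ) / m * ε := ⟨_, rfl⟩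
        rw [← ht]
        have ht0 : 0 ≤ t := by linarith
        have ht1 : t ≤ 1 / 8 := by linarith
        refine Km_down m hm _ _ ((1 - 2 * t) * (cS m k * p 0 + dS m k) + 2 * t * (-3)) _ hx2 hxn
          ?_ (by nlinarith) (by linarith)
        refine Km_comb m _ _ hchord hw1 (2 * t) (by linarith) (by linarith) _ ?_
        intro a; fin_cases a
        · simp; ring
        · simp
        · simp; ring
  exact ⟨lt_of_le_of_ne hx0 hzj.1, lt_of_le_of_ne hx1 hzj.2.symm, lt_of_le_of_ne hz0 hlast.1,
    lt_of_le_of_ne hz1 htop, lt_of_le_of_ne hy0 hlast.2, lt_of_le_of_ne hy1 hout⟩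

/-- x-coordinate of the witness point. -/
noncomputable def pX (m j k : ℕ) : ℝ := (VX m (fr m j) k + VX m (fr m (j + 1)) k) / 2

/-- The witness point in the hole `(i,j,k)`. -/
noncomputable def wit (m : ℕ) (ε : ℝ) (i j k : ℕ) : Fin 3 → ℝ :=
  ![pX m j k, cS m k * pX m j k + dS m k - ε / m, -((i : ℝ) / m * ε) - ε / m / 2]

lemma pX_mem (m j k : ℕ) (hm : 2 ≤ m) (hk : k ≤ m) :
    VX m (fr m (j + 1)) k < pX m j k ∧ pX m j k < VX m (fr m j) k := by
  have := VX_lt m (fr m j) (fr m (j + 1)) k hm (by omega) (fr_lt m j (j + 1) (by omega))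
  unfold pX; constructor <;> linarith

lemma wit_mem (m : ℕ) (hm : 2 ≤ m) (ε : ℝ) (he : 0 < ε) (he8 : ε ≤ 1 / 8)
    (he2 : 2 * ε < (1/2 : ℝ) ^ m) (i j k : ℕ) (hjm : j + 1 ≤ m) (hkm : k ≤ m) :
    wit m ε i j k ∈ hU m ε i j k := by
  have hm0 : (0 : ℝ) < m := by exact_mod_cast (by omega : 0 < m)
  have hm1 : (1 : ℝ) ≤ m := by exact_mod_cast (by omega : 1 ≤ m)
  have hem : ε / m ≤ ε := div_le_self he.le hm1
  have hem0 : 0 < ε / m := by positivity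
  have hx := pX_mem m j k hm hkm
  refine ⟨hx.1, hx.2, ?_, ?_, ?_, ?_⟩
  · unfold zlo
    simp only [wit, Matrix.cons_val]
    split_ifs with h
    · subst h
      have h1 : (1/2 : ℝ) ^ i ≤ (1/2 : ℝ) ^ (j + 1) :=
        pow_le_pow_of_le_one (by norm_num) (by norm_num) hjm
      rw [div_self hm0.ne']
      linarith
    · have hstep : ((i + 1 : ℕ) : ℝ) / m * ε = (i : ℝ) / m * ε + ε / m := by push_cast; ring
      rw [hstep]; linarith
  · simp only [wit, Matrix.cons_val]; linarith
  · simp only [wit, Matrix.cons_val, Matrix.cons_val_zero, Matrix.cons_val_one]; linarith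
  · simp only [wit, Matrix.cons_val, Matrix.cons_val_zero, Matrix.cons_val_one]; linarith

/-- The gap between the witness point and the translate `B_l`. -/
lemma exists_gap (m : ℕ) (hm : 2 ≤ m) (j k l : ℕ) (hj : 1 ≤ j) (hjm : j + 1 ≤ m)
    (hk : 1 ≤ k) (hkm : k ≤ m) (hl : 1 ≤ l) (hlm : l ≤ m) :
    ∃ g : ℝ, 0 < g ∧ ∀ p ∈ Km m, p 0 = pX m j k →
      p 1 ≤ cS m k * pX m j k + dS m k - g - 3 * l + 4 * 2 ^ l * (1 - (1/2 : ℝ) ^ l - p 2) := by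
  have hs0 := fr_pos m l hl
  have hs1 := fr_lt_one m l hlm
  have hx := pX_mem m j k hm hkm
  have main : ∀ a ≤ m, ∀ c d : ℝ, (∀ x y : ℝ, y ≤ cS m a * x + dS m a →
        y ≤ cS m (a + 1) * x + dS m (a + 1) →
        (VX m (fr m l) a ≤ x ∨ x ≤ VX m (fr m l) (a + 1)) → y ≤ c * x + d) →
      (c * pX m j k + d < cS m k * pX m j k + dS m k) →
      ∃ g : ℝ, 0 < g ∧ ∀ p ∈ Km m, p 0 = pX m j k →
      p 1 ≤ cS m k * pX m j k + dS m k - g - 3 * l + 4 * 2 ^ l * (1 - (1/2 : ℝ) ^ l - p 2) := by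
    intro a ha c d h1 h2
    refine ⟨cS m k * pX m j k + dS m k - (c * pX m j k + d), by linarith, ?_⟩
    intro p hp hpx
    have hr := VX_range m (fr m l) a hm (by omega) hs0.le hs1.le
    have hr2 := VX_range m (fr m l) (a + 1) hm (by omega) hs0.le hs1.le
    have := Km_B m l hm hlm c d ?_ ?_ ?_ p hp
    · rw [hpx] at this; linarith
    · intro k' hk'
      apply h1
      · exact VY_le m _ a k' hm (by omega) hk' hs0.le hs1.le
      · exact VY_le m _ (a + 1) k' hm (by omega) hk' hs0.le hs1.le
      · rcases Nat.lt_trichotomy k' a with h | h | h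
        · left; exact VX_step m _ k' a hm h (by omega) hs0.le hs1.le
        · left; rw [h]
        · right
          rcases Nat.eq_or_lt_of_le (Nat.succ_le_of_lt h) with h' | h'
          · rw [← h']
          · exact VX_step m _ (a + 1) k' hm h' (by omega) hs0.le hs1.le
    · have := h1 0 0 (line_nonneg m a hm (by omega) 0 (by norm_num) le_rfl)
        (line_nonneg m (a + 1) hm (by omega) 0 (by norm_num) le_rfl) (Or.inl hr.2)
      linarith
    · exact h1 (-2) 0 (line_nonneg m a hm (by omega) (-2) le_rfl (by norm_num))
        (line_nonneg m (a + 1) hm (by omega) (-2) le_rfl (by norm_num)) (Or.inr hr2.1)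
  rcases Nat.lt_or_ge j l with h | h
  · -- cut on the side of the chord `k - 1`
    obtain ⟨a, rfl⟩ : ∃ a, k = a + 1 := ⟨k - 1, by omega⟩
    obtain ⟨c, d, h1, -, h3⟩ := exists_lam m (fr m l) a hm (by omega) hs0 hs1
    refine main a (by omega) c d h1 (h3 _ ?_)
    refine lt_of_le_of_lt ?_ hx.1
    rcases Nat.eq_or_lt_of_le (Nat.succ_le_of_lt h) with h' | h'
    · rw [← h']
    · exact (VX_lt m _ _ (a + 1) hm (by omega) (fr_lt m (j + 1) l h')).le
  · obtain ⟨c, d, h1, h2, -⟩ := exists_lam m (fr m l) k hm (by omega) hs0 hs1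
    refine main k (by omega) c d h1 (h2 _ ?_)
    refine lt_of_lt_of_le hx.2 ?_
    rcases Nat.eq_or_lt_of_le h with h' | h'
    · rw [← h']
    · exact (VX_lt m _ _ k hm (by omega) (fr_lt m l j h')).le

lemma wit_out (m : ℕ) (hm : 2 ≤ m) (ε : ℝ) (he : 0 < ε) (i j k : ℕ)
    (him : i ≤ m) (hj : 1 ≤ j) (hjm : j + 1 ≤ m) (hkm : k ≤ m)
    (hg : ∀ l, 1 ≤ l → l ≤ m → ∀ p ∈ Km m, p 0 = pX m j k →
      p 1 < cS m k * pX m j k + dS m k - (1 + 8 * 2 ^ m) * ε - 3 * l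
        + 4 * 2 ^ l * (1 - (1/2 : ℝ) ^ l - p 2)) :
    outS m ε (wit m ε i j k) := by
  have hm0 : (0 : ℝ) < m := by exact_mod_cast (by omega : 0 < m)
  have hm1 : (1 : ℝ) ≤ m := by exact_mod_cast (by omega : 1 ≤ m)
  have hem : ε / m ≤ ε := div_le_self he.le hm1
  have hem0 : 0 < ε / m := by positivity
  have hx := pX_mem m j k hm hkm
  have v0 := VX_mem m (fr m (j + 1)) k hm (by omega) (fr_nonneg _ _) (fr_lt_one m _ hjm).le
  have v1 := VX_mem m (fr m j) k hm (by omega) (fr_nonneg _ _) (fr_lt_one m _ (by omega)).le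
  refine ⟨?_, ?_, ?_⟩
  · intro i' hi' him' hmem
    simp only [wit, Matrix.cons_val, Matrix.cons_val_zero, Matrix.cons_val_one] at hmem
    have e : ∀ a : ℕ, (a : ℝ) / m * ε = a * (ε / m) := by intro a; ring
    rw [e, e] at hmem
    rcases Nat.lt_or_ge i i' with h | h
    · have := Km_A m k hm (by omega) _ hmem
      simp only [Matrix.cons_val, Matrix.cons_val_zero, Matrix.cons_val_one] at this
      have h' : (i : ℝ) + 1 ≤ i' := by exact_mod_cast h
      nlinarith
    · have := (Km_z m _ hmem).1
      simp only [Matrix.cons_val] at this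
      have h' : (i' : ℝ) ≤ i := by exact_mod_cast h
      nlinarith
  · intro l hl hlm hmem
    have := hg l hl hlm _ hmem (by simp [wit])
    simp only [wit, Matrix.cons_val, Matrix.cons_val_zero, Matrix.cons_val_one] at this
    have h2 : (i : ℝ) / m * ε ≤ ε :=
      mul_le_of_le_one_left he.le ((div_le_one hm0).2 (by exact_mod_cast him))
    have h3 : 0 ≤ (i : ℝ) / m * ε := by positivity
    have h4 : (2 : ℝ) ^ l ≤ 2 ^ m := pow_le_pow_right₀ (by norm_num) hlm
    have h5 : (0 : ℝ) < 2 ^ l := by positivity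
    have h6 : (2 : ℝ) ^ l * ((i : ℝ) / m * ε + ε / m / 2) ≤ 2 ^ m * (2 * ε) :=
      mul_le_mul h4 (by linarith) (by positivity) (by positivity)
    linarith
  · intro k' hk' hkm' hmem
    have := Km_C m k' hm (by omega) _ hmem
    simp only [wit, Matrix.cons_val, Matrix.cons_val_zero, Matrix.cons_val_one] at this
    have a := line_left m k' hm (by omega)
    have b := line_right m k' hm (by omega)
    have c := line_le_line m k k' hm (by omega) (by omega) (pX m j k) (by linarith) (by linarith)
    linarith

lemma frac_lt_half_aux (m : ℕ) (hm : 2 ≤ m) (ε : ℝ) (he : 0 < ε) (a b : ℕ)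
    (h : (a : ℝ) / m * ε < b / m * ε + ε / m) : a ≤ b := by
  have hm0 : (0 : ℝ) < m := by exact_mod_cast (by omega : 0 < m)
  have e : 0 < ε / m := by positivity
  have : (a : ℝ) < b + 1 := by
    by_contra hc
    push Not at hc
    have : (b + 1 : ℝ) * (ε / m) ≤ a * (ε / m) := by gcongr
    have e1 : (a : ℝ) / m * ε = a * (ε / m) := by ring
    have e2 : (b : ℝ) / m * ε = b * (ε / m) := by ring
    linarith
  have : a < b + 1 := by exact_mod_cast this
  omega

/-- A witness lies in the prism of its own hole only. -/
lemma wit_inj (m : ℕ) (hm : 2 ≤ m) (ε : ℝ) (he : 0 < ε)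
    (i j k i' j' k' : ℕ) (him : i ≤ m) (him' : i' ≤ m)
    (hjm : j + 1 ≤ m) (hjm' : j' + 1 ≤ m) (hkm : k ≤ m) (hkm' : k' ≤ m)
    (h : wit m ε i j k ∈ hU m ε i' j' k') : i = i' ∧ j = j' ∧ k = k' := by
  obtain ⟨a, b, c, d, -, -⟩ := h
  simp only [wit, Matrix.cons_val, Matrix.cons_val_zero] at a b c d
  have hx := pX_mem m j k hm hkm
  have v0 := VX_mem m (fr m (j + 1)) k hm (by omega) (fr_nonneg _ _) (fr_lt_one m _ hjm).le
  have v1 := VX_mem m (fr m j) k hm (by omega) (fr_nonneg _ _) (fr_lt_one m _ (by omega)).le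
  have v0' := VX_mem m (fr m (j' + 1)) k' hm (by omega) (fr_nonneg _ _) (fr_lt_one m _ hjm').le
  have v1' := VX_mem m (fr m j') k' hm (by omega) (fr_nonneg _ _) (fr_lt_one m _ (by omega)).le
  have hk : k = k' := by
    rcases Nat.lt_trichotomy k k' with h | h | h
    · have := X_le m hm (k + 1) k' (by omega) (by omega); linarith
    · exact h
    · have := X_le m hm (k' + 1) k (by omega) (by omega); linarith
  subst hk
  have mono : ∀ p q : ℕ, p ≤ q → VX m (fr m q) k ≤ VX m (fr m p) k := by
    intro p q hpq
    rcases Nat.eq_or_lt_of_le hpq with h | h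
    · rw [h]
    · exact (VX_lt m _ _ k hm (by omega) (fr_lt m p q h)).le
  have hj : j = j' := by
    rcases Nat.lt_trichotomy j j' with h | h | h
    · have := mono (j + 1) j' (by omega); linarith
    · exact h
    · have := mono (j' + 1) j (by omega); linarith
  subst hj
  have hm0 : (0 : ℝ) < m := by exact_mod_cast (by omega : 0 < m)
  have e : 0 < ε / m := by positivity
  have h1 : i' ≤ i := frac_lt_half_aux m hm ε he _ _ (by linarith)
  have h2 : i ≤ i' := by
    unfold zlo at c
    split_ifs at c with h
    · omega
    · have hstep : ((i' + 1 : ℕ) : ℝ) / m * ε = (i' : ℝ) / m * ε + ε / m := by push_cast; ring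
      exact frac_lt_half_aux m hm ε he _ _ (by linarith)
  exact ⟨by omega, rfl, rfl⟩

lemma exists_unif_gap (m : ℕ) (hm : 2 ≤ m) :
    ∃ g : ℝ, 0 < g ∧ ∀ j k l : ℕ, 1 ≤ j → j + 1 ≤ m → 1 ≤ k → k ≤ m → 1 ≤ l → l ≤ m →
      ∀ p ∈ Km m, p 0 = pX m j k →
      p 1 ≤ cS m k * pX m j k + dS m k - g - 3 * l + 4 * 2 ^ l * (1 - (1/2 : ℝ) ^ l - p 2) := by
  have H : ∀ t : Fin (m - 1) × Fin m × Fin m, ∃ g : ℝ, 0 < g ∧ ∀ p ∈ Km m,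
      p 0 = pX m (t.1 + 1) (t.2.1 + 1) →
      p 1 ≤ cS m (t.2.1 + 1) * pX m (t.1 + 1) (t.2.1 + 1) + dS m (t.2.1 + 1) - g
        - 3 * ((t.2.2 + 1 : ℕ) : ℝ)
        + 4 * 2 ^ (t.2.2.val + 1) * (1 - (1/2 : ℝ) ^ (t.2.2.val + 1) - p 2) := by
    intro t
    exact exists_gap m hm _ _ _ (by omega) (by omega) (by omega) (by omega) (by omega) (by omega)
  choose g hg0 hg using H
  haveI : Nonempty (Fin (m - 1) × Fin m × Fin m) :=
    ⟨⟨⟨0, by omega⟩, ⟨0, by omega⟩, ⟨0, by omega⟩⟩⟩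
  obtain ⟨t0, ht0⟩ := Finite.exists_min g
  refine ⟨g t0, hg0 t0, ?_⟩
  intro j k l hj hjm hk hkm hl hlm p hp hpx
  obtain ⟨j, rfl⟩ : ∃ a, j = a + 1 := ⟨j - 1, by omega⟩
  obtain ⟨k, rfl⟩ : ∃ a, k = a + 1 := ⟨k - 1, by omega⟩
  obtain ⟨l, rfl⟩ : ∃ a, l = a + 1 := ⟨l - 1, by omega⟩
  have h1 := hg ⟨⟨j, by omega⟩, ⟨k, by omega⟩, ⟨l, by omega⟩⟩ p hp hpx
  have h2 := ht0 ⟨⟨j, by omega⟩, ⟨k, by omega⟩, ⟨l, by omega⟩⟩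
  simp only at h1
  linarith

/-- **The construction of Section 3.** For `m ≥ 2` there is `ε₀ > 0` such that for
all `0 < ε < ε₀`, the complement of the union of the `3m` translates
`A_i = K_m + (0,0,−(i/m)ε)`, `B_j = K_m − w(j,0)`, `C_k = K_m + (w(0,k)+w(0,k+1)−u₁)`
has at least `m²(m−1)` connected components. -/
theorem Km_translates_many_holes (m : ℕ) (hm : 2 ≤ m) :
    ∃ ε₀ : ℝ, 0 < ε₀ ∧ ∀ ε : ℝ, 0 < ε → ε < ε₀ →
      ((m ^ 2 * (m - 1) : ℕ) : Cardinal) ≤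
        Cardinal.mk (ConnectedComponents
          ↥(((⋃ i ∈ Finset.Icc 1 m, (![(0 : ℝ), 0, -((i : ℝ) / (m : ℝ)) * ε] +ᵥ Km m)) ∪
             (⋃ j ∈ Finset.Icc 1 m, ((-(wJ j)) +ᵥ Km m)) ∪
             (⋃ k ∈ Finset.Icc 1 m, ((wK m k + wK m (k + 1) - uOne m) +ᵥ Km m)))ᶜ)) := by
  obtain ⟨g, hg0, hg⟩ := exists_unif_gap m hm
  have hD : (0 : ℝ) < 1 + 8 * 2 ^ m := by positivity
  refine ⟨min (1 / 8) (min ((1/2 : ℝ) ^ m / 2) (g / (1 + 8 * 2 ^ m))), by positivity, ?_⟩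
  intro ε he hlt
  obtain ⟨he8, hlt⟩ := lt_min_iff.1 hlt
  obtain ⟨he2, heg⟩ := lt_min_iff.1 hlt
  rw [lt_div_iff₀ hD] at heg
  have he2' : 2 * ε < (1/2 : ℝ) ^ m := by linarith
  generalize hS : (((⋃ i ∈ Finset.Icc 1 m, (![(0 : ℝ), 0, -((i : ℝ) / (m : ℝ)) * ε] +ᵥ Km m)) ∪
             (⋃ j ∈ Finset.Icc 1 m, ((-(wJ j)) +ᵥ Km m)) ∪
             (⋃ k ∈ Finset.Icc 1 m, ((wK m k + wK m (k + 1) - uOne m) +ᵥ Km m)))ᶜ) = S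
  have hmem : ∀ p, p ∈ S ↔ outS m ε p := by
    intro p; rw [← hS]; exact mem_compl_iff_outS m ε p
  have hwS : ∀ t : Fin m × Fin (m - 1) × Fin m,
      wit m ε (t.1 + 1) (t.2.1 + 1) (t.2.2 + 1) ∈ S := by
    intro t
    rw [hmem]
    refine wit_out m hm ε he _ _ _ (by omega) (by omega) (by omega) (by omega) ?_
    intro l hl hlm p hp hpx
    have := hg _ _ l (by omega) (by omega) (by omega) (by omega) hl hlm p hp hpx
    linarith
  have hclopen : ∀ t : Fin m × Fin (m - 1) × Fin m, IsClopen
      ((Subtype.val : S → Fin 3 → ℝ) ⁻¹' hU m ε (t.1 + 1) (t.2.1 + 1) (t.2.2 + 1)) := by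
    intro t
    refine ⟨?_, (hU_open m ε _ _ _).preimage continuous_subtype_val⟩
    have : ((Subtype.val : S → Fin 3 → ℝ) ⁻¹' hU m ε (t.1 + 1) (t.2.1 + 1) (t.2.2 + 1)) =
        ((Subtype.val : S → Fin 3 → ℝ) ⁻¹' hF m ε (t.1 + 1) (t.2.1 + 1) (t.2.2 + 1)) := by
      apply Set.Subset.antisymm
      · exact Set.preimage_mono (hU_sub_hF m ε _ _ _)
      · intro p hp
        exact cover m hm ε he he8.le he2' _ _ _ (by omega) (by omega) (by omega) (by omega)
          (by omega) (by omega) p.1 hp ((hmem _).1 p.2)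
    rw [this]
    exact (hF_closed m ε _ _ _).preimage continuous_subtype_val
  have hinj : Function.Injective (fun t : Fin m × Fin (m - 1) × Fin m =>
      (ConnectedComponents.mk (⟨_, hwS t⟩ : S))) := by
    intro t t' h
    have h1 : connectedComponent (⟨_, hwS t⟩ : S) = connectedComponent (⟨_, hwS t'⟩ : S) :=
      ConnectedComponents.coe_eq_coe.1 h
    have h2 : (⟨_, hwS t⟩ : S) ∈ connectedComponent (⟨_, hwS t'⟩ : S) := by
      rw [← h1]; exact mem_connectedComponent
    have h3 := (hclopen t').connectedComponent_subset
      (x := (⟨_, hwS t'⟩ : S)) (wit_mem m hm ε he he8.le he2' _ _ _ (by omega) (by omega)) h2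
    obtain ⟨a, b, c⟩ := wit_inj m hm ε he _ _ _ _ _ _ (by omega) (by omega) (by omega) (by omega)
      (by omega) (by omega) h3
    refine Prod.ext (Fin.ext (by omega)) (Prod.ext (Fin.ext (by omega)) (Fin.ext (by omega)))
  have hc := Cardinal.mk_le_of_injective hinj
  have e : Cardinal.mk (Fin m × Fin (m - 1) × Fin m) = ((m ^ 2 * (m - 1) : ℕ) : Cardinal) := by
    rw [Cardinal.mk_fintype]
    simp only [Fintype.card_prod, Fintype.card_fin]
    congr 1
    ring
  rw [← e]
  exact hc
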